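/- Let u, v ∈ C²(B̄_1) be harmonic in B_1 \ {0} (B_1 the unit disc in R²), and for 0 < d < 1 define P_d(u,v) = −2d ∫_{∂B_d} ⟨∇u,ν⟩⟨∇v,ν⟩ dσ + d ∫_{∂B_d} ⟨∇u,∇v⟩ dσ, where ν is the outward unit normal of ∂B_d. Then P_d(u,v) is independent of d ∈ (0,1). -/

import Mathlib

open Metric MeasureTheory RealInnerProductSpace

noncomputable section

/-- The Euclidean Laplacian on `ℝ²`, as the sum of second partial derivatives. -/
def lap (f : EuclideanSpace ℝ (Fin 2) → ℝ) (x : EuclideanSpace ℝ (Fin 2)) : ℝ :=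
  ∑ i : Fin 2,
    fderiv ℝ (fun y => fderiv ℝ f y (EuclideanSpace.single i 1)) x (EuclideanSpace.single i 1)

/-- The quadratic boundary form
`P_d(u,v) = -2d ∫_{∂B_d} ⟨∇u,ν⟩⟨∇v,ν⟩ dσ + d ∫_{∂B_d} ⟨∇u,∇v⟩ dσ`. -/
def quadP (u v : EuclideanSpace ℝ (Fin 2) → ℝ) (d : ℝ) : ℝ :=
  -2 * d * (∫ x in sphere (0 : EuclideanSpace ℝ (Fin 2)) d,
      ⟪gradient u x, ‖x‖⁻¹ • x⟫ * ⟪gradient v x, ‖x‖⁻¹ • x⟫ ∂(μH[1]))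
    + d * ∫ x in sphere (0 : EuclideanSpace ℝ (Fin 2)) d,
        ⟪gradient u x, gradient v x⟫ ∂(μH[1])

/-- The one-dimensional Hausdorff measure of a circle in the complex plane is finite. -/
lemma hausdorffMeasure_one_sphere_lt_top {d : ℝ} (hd : 0 ≤ d) :
    μH[1] (sphere (0 : ℂ) d) < ⊤ := by
  have h := (lipschitzWith_circleMap 0 d).hausdorffMeasure_image_le zero_le_one
    (Set.Ioc 0 (2 * Real.pi))
  rw [image_circleMap_Ioc, abs_of_nonneg hd] at h
  refine h.trans_lt (ENNReal.mul_lt_top (by simp) ?_)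
  rw [hausdorffMeasure_real]
  exact measure_Ioc_lt_top

/-- The one-dimensional Hausdorff measure on a circle centred at the origin is invariant under
rotations. -/
lemma setIntegral_sphere_circle_mul (F : ℂ → ℂ) (d : ℝ) (c : Circle) :
    ∫ z in sphere (0 : ℂ) d, F (c * z) ∂(μH[1]) = ∫ z in sphere (0 : ℂ) d, F z ∂(μH[1]) := by
  have hm := (rotation c).toIsometryEquiv.measurePreserving_hausdorffMeasure 1
  have h := hm.setIntegral_preimage_emb
    (rotation c).toHomeomorph.measurableEmbedding F (sphere 0 d)
  have hs : (rotation c).toIsometryEquiv ⁻¹' sphere 0 d = sphere 0 d := by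
    rw [IsometryEquiv.preimage_sphere]
    exact congrArg (sphere · d) (rotation c).symm.map_zero
  rw [hs] at h
  simpa using h

/-- The integral of a holomorphic function over a circle, with respect to Hausdorff measure,
vanishes if the function vanishes at the centre. -/
lemma setIntegral_sphere_eq_zero_of_differentiableAt {F : ℂ → ℂ}
    (hc : ContinuousOn F (ball 0 1)) (hF : ∀ z ∈ ball (0 : ℂ) 1 \ {0}, DifferentiableAt ℂ F z)
    (h0 : F 0 = 0) {d : ℝ} (hd : d ∈ Set.Ioo (0 : ℝ) 1) :
    ∫ z in sphere (0 : ℂ) d, F z ∂(μH[1]) = 0 := by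
  set ν : Measure ℂ := (μH[1] : Measure ℂ).restrict (sphere 0 d) with hν
  have : IsFiniteMeasure ν := ⟨by
    simpa [hν] using hausdorffMeasure_one_sphere_lt_top hd.1.le⟩
  have hmean : ∀ z ∈ sphere (0 : ℂ) d,
      ∫ θ in (0 : ℝ)..2 * Real.pi, F (circleMap 0 1 θ * z) = 0 := by
    intro z hz
    have hzn : ‖z‖ = d := by simpa using hz
    have hz0 : z ≠ 0 := by
      rw [← norm_pos_iff, hzn]; exact hd.1
    have hmaps : ∀ w ∈ closedBall (0 : ℂ) 1, w * z ∈ ball (0 : ℂ) 1 := by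
      intro w hw
      have hw' : ‖w‖ ≤ 1 := by simpa using hw
      have : ‖w * z‖ < 1 := by
        rw [norm_mul, hzn]
        nlinarith [hd.1, hd.2]
      simpa using this
    have h := circleAverage_of_differentiable_on_off_countable (f := fun w => F (w * z))
      (c := 0) (R := 1) (Set.countable_singleton (0 : ℂ))
      (hc.comp (by fun_prop) (fun w hw => hmaps w (by simpa using hw))) (by
        intro w hw
        have hw1 : w ∈ ball (0 : ℂ) 1 := by simpa using hw.1
        have hw2 : w ≠ 0 := by simpa using hw.2
        exact (hF (w * z) ⟨hmaps w (ball_subset_closedBall hw1), by simp [hw2, hz0]⟩).comp w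
          (by fun_prop))
    rw [Real.circleAverage_def, zero_mul, h0] at h
    simpa [Real.pi_ne_zero] using h
  have hint : Integrable (Function.uncurry fun (θ : ℝ) z => F (circleMap 0 1 θ * z))
      ((volume.restrict (Set.uIoc 0 (2 * Real.pi))).prod ν) := by
    have hcont : ContinuousOn (Function.uncurry fun (θ : ℝ) z => F (circleMap 0 1 θ * z))
        (Set.uIcc 0 (2 * Real.pi) ×ˢ sphere (0 : ℂ) d) := by
      refine hc.comp (by fun_prop) ?_
      rintro ⟨θ, z⟩ ⟨-, hz⟩
      have hzn : ‖z‖ = d := by simpa using hz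
      simpa [hzn] using hd.2
    have h : IntegrableOn _ _ ((volume : Measure ℝ).prod ν) :=
      hcont.integrableOn_compact (isCompact_uIcc.prod (isCompact_sphere 0 d))
    rw [IntegrableOn, ← Measure.prod_restrict, hν,
      Measure.restrict_restrict isClosed_sphere.measurableSet, Set.inter_self] at h
    exact h.mono_measure (Measure.prod_mono
      (Measure.restrict_mono Set.uIoc_subset_uIcc le_rfl) le_rfl)
  have hswap := intervalIntegral_integral_swap hint
  have hrot : ∀ θ : ℝ, ∫ z, F (circleMap 0 1 θ * z) ∂ν = ∫ z, F z ∂ν := by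
    intro θ
    have := setIntegral_sphere_circle_mul F d (Circle.exp θ)
    simpa [circleMap, Circle.coe_exp] using this
  have hzero : ∫ z, (∫ θ in (0 : ℝ)..2 * Real.pi, F (circleMap 0 1 θ * z)) ∂ν = 0 :=
    setIntegral_eq_zero_of_forall_eq_zero hmean
  rw [hzero] at hswap
  simp only [hrot] at hswap
  simpa [Real.pi_ne_zero] using hswap

/-- The isometry `x + i y ↦ (x, y)` from the complex plane onto the Euclidean plane. -/
abbrev complexIso : ℂ ≃ₗᵢ[ℝ] EuclideanSpace ℝ (Fin 2) := Complex.orthonormalBasisOneI.repr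

/-- The complex derivative `∂u/∂x - i ∂u/∂y` of a function on the Euclidean plane, read in the
complex coordinate. -/
def complexPartial (u : EuclideanSpace ℝ (Fin 2) → ℝ) (z : ℂ) : ℂ :=
  fderiv ℝ (u ∘ complexIso) z 1 - Complex.I * fderiv ℝ (u ∘ complexIso) z Complex.I

lemma fderiv_comp_complexIso (u : EuclideanSpace ℝ (Fin 2) → ℝ) (z w : ℂ) :
    fderiv ℝ (u ∘ complexIso) z w = fderiv ℝ u (complexIso z) (complexIso w) := by
  have := complexIso.toContinuousLinearEquiv.comp_right_fderiv (f := u) (x := z)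
  exact congrArg (fun L => L w) this

lemma inner_gradient_complexIso (u : EuclideanSpace ℝ (Fin 2) → ℝ) (z w : ℂ) :
    ⟪gradient u (complexIso z), complexIso w⟫ = (w * complexPartial u z).re := by
  have h : w = w.re • (1 : ℂ) + w.im • Complex.I := by simp [Complex.re_add_im]
  rw [gradient, InnerProductSpace.toDual_symm_apply, ← fderiv_comp_complexIso]
  conv_lhs => rw [h, map_add, map_smul, map_smul]
  simp [complexPartial]

lemma inner_gradient_gradient (u v : EuclideanSpace ℝ (Fin 2) → ℝ) (z : ℂ) :
    ⟪gradient u (complexIso z), gradient v (complexIso z)⟫ =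
      (complexPartial u z * star (complexPartial v z)).re := by
  rw [← (Complex.orthonormalBasisOneI.map complexIso).sum_inner_mul_inner, Fin.sum_univ_two]
  simp only [OrthonormalBasis.map_apply, Complex.coe_orthonormalBasisOneI, Matrix.cons_val_zero,
    Matrix.cons_val_one]
  rw [real_inner_comm (gradient v _), real_inner_comm (gradient v _)]
  simp only [inner_gradient_complexIso]
  simp

lemma contDiffAt_comp_complexIso {u : EuclideanSpace ℝ (Fin 2) → ℝ}
    (hu : ContDiffOn ℝ 2 u (closedBall 0 1)) {z : ℂ} (hz : z ∈ ball (0 : ℂ) 1) :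
    ContDiffAt ℝ 2 (u ∘ complexIso) z := by
  have h : complexIso z ∈ ball 0 1 := by simpa using hz
  exact (hu.contDiffAt (Filter.mem_of_superset (isOpen_ball.mem_nhds h)
    ball_subset_closedBall)).comp z complexIso.contDiff.contDiffAt

lemma continuousOn_complexPartial {u : EuclideanSpace ℝ (Fin 2) → ℝ}
    (hu : ContDiffOn ℝ 2 u (closedBall 0 1)) : ContinuousOn (complexPartial u) (ball 0 1) := by
  intro z hz
  have h := (contDiffAt_comp_complexIso hu hz).continuousAt_fderiv two_ne_zero
  apply ContinuousAt.continuousWithinAt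
  unfold complexPartial
  fun_prop

lemma laplacian_comp_complexIso {u : EuclideanSpace ℝ (Fin 2) → ℝ}
    (hu : ContDiffOn ℝ 2 u (closedBall 0 1)) {z : ℂ} (hz : z ∈ ball (0 : ℂ) 1) :
    Laplacian.laplacian (u ∘ complexIso) z = lap u (complexIso z) := by
  have hd : DifferentiableAt ℝ (fderiv ℝ (u ∘ complexIso)) z :=
    ((contDiffAt_comp_complexIso hu hz).fderiv_right (m := 1) (by norm_num)).differentiableAt
      one_ne_zero
  rw [InnerProductSpace.laplacian_eq_iteratedFDeriv_orthonormalBasis _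
    Complex.orthonormalBasisOneI, lap]
  refine Finset.sum_congr rfl fun i _ => ?_
  set b := Complex.orthonormalBasisOneI i with hb
  have hbi : EuclideanSpace.single i 1 = complexIso b := by
    rw [hb, OrthonormalBasis.repr_self]
  have h1 : (fun y => fderiv ℝ u y (EuclideanSpace.single i 1)) ∘ complexIso =
      fun w => fderiv ℝ (u ∘ complexIso) w b := by
    ext w
    rw [fderiv_comp_complexIso, ← hbi, Function.comp_apply]
  rw [hbi, ← fderiv_comp_complexIso, ← hbi, h1, iteratedFDeriv_two_apply,
    fderiv_clm_apply hd (by fun_prop)]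
  simp

lemma differentiableAt_complexPartial {u : EuclideanSpace ℝ (Fin 2) → ℝ}
    (hu : ContDiffOn ℝ 2 u (closedBall 0 1))
    (hu0 : ∀ x ∈ ball (0 : EuclideanSpace ℝ (Fin 2)) 1 \ {0}, lap u x = 0)
    {z : ℂ} (hz : z ∈ ball (0 : ℂ) 1 \ {0}) : DifferentiableAt ℂ (complexPartial u) z := by
  apply HarmonicAt.differentiableAt_complex_partial
  refine ⟨contDiffAt_comp_complexIso hu hz.1, ?_⟩
  filter_upwards [(isOpen_ball.sdiff isClosed_singleton).mem_nhds hz] with w hw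
  rw [laplacian_comp_complexIso hu hw.1]
  exact hu0 _ ⟨by simpa using hw.1, by simpa using hw.2⟩

lemma setIntegral_sphere_complexIso (g : EuclideanSpace ℝ (Fin 2) → ℝ) (d : ℝ) :
    ∫ x in sphere 0 d, g x ∂(μH[1]) = ∫ z in sphere (0 : ℂ) d, g (complexIso z) ∂(μH[1]) := by
  have hm := complexIso.toIsometryEquiv.measurePreserving_hausdorffMeasure 1
  have h := hm.setIntegral_preimage_emb
    complexIso.toHomeomorph.measurableEmbedding g (sphere 0 d)
  have hs : complexIso.toIsometryEquiv ⁻¹' sphere 0 d = sphere 0 d := by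
    ext z; simp
  rw [hs] at h
  exact h.symm

/-- Writing `f = ∂u/∂x - i ∂u/∂y` and `h = ∂v/∂x - i ∂v/∂y`, the form `P_d(u,v)` is
`-d⁻¹ Re ∫_{∂B_d} z² f h dσ`, which vanishes by the mean value property. -/
lemma quadP_eq_zero {u v : EuclideanSpace ℝ (Fin 2) → ℝ}
    (hu : ContDiffOn ℝ 2 u (closedBall (0 : EuclideanSpace ℝ (Fin 2)) 1))
    (hv : ContDiffOn ℝ 2 v (closedBall (0 : EuclideanSpace ℝ (Fin 2)) 1))
    (hu0 : ∀ x ∈ ball (0 : EuclideanSpace ℝ (Fin 2)) 1 \ {0}, lap u x = 0)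
    (hv0 : ∀ x ∈ ball (0 : EuclideanSpace ℝ (Fin 2)) 1 \ {0}, lap v x = 0)
    {d : ℝ} (hd : d ∈ Set.Ioo (0 : ℝ) 1) : quadP u v d = 0 := by
  set f := complexPartial u
  set h := complexPartial v
  have hsub : sphere (0 : ℂ) d ⊆ ball 0 1 := fun z hz => by
    have : ‖z‖ = d := by simpa using hz
    simpa [this] using hd.2
  have hfc := continuousOn_complexPartial hu
  have hhc := continuousOn_complexPartial hv
  have hfs : ContinuousOn f (sphere 0 d) := hfc.mono hsub
  have hhs : ContinuousOn h (sphere 0 d) := hhc.mono hsub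
  have hF : ∫ z in sphere (0 : ℂ) d, z ^ 2 * (f z * h z) ∂(μH[1]) = 0 :=
    setIntegral_sphere_eq_zero_of_differentiableAt
      ((continuousOn_id.pow 2).mul (hfc.mul hhc))
      (fun z hz => (differentiableAt_id.pow 2).mul
        ((differentiableAt_complexPartial hu hu0 hz).mul
          (differentiableAt_complexPartial hv hv0 hz)))
      (by simp) hd
  have hfin : (μH[1] : Measure ℂ) (sphere 0 d) ≠ ⊤ :=
    (hausdorffMeasure_one_sphere_lt_top hd.1.le).ne
  have hint : ∀ {E : Type} [NormedAddCommGroup E] {g : ℂ → E},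
      ContinuousOn g (sphere 0 d) → IntegrableOn g (sphere 0 d) μH[1] := fun hg =>
    hg.integrableOn_of_subset_isCompact (isCompact_sphere 0 d) isClosed_sphere.measurableSet
      subset_rfl hfin
  have hA : IntegrableOn (fun z => (z * f z).re * (z * h z).re) (sphere 0 d) μH[1] :=
    hint ((Complex.continuous_re.comp_continuousOn (continuousOn_id.mul hfs)).mul
      (Complex.continuous_re.comp_continuousOn (continuousOn_id.mul hhs)))
  have hB : IntegrableOn (fun z => (f z * star (h z)).re) (sphere 0 d) μH[1] :=
    hint (Complex.continuous_re.comp_continuousOn (hfs.mul hhs.star))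
  have hFi : IntegrableOn (fun z => z ^ 2 * (f z * h z)) (sphere 0 d) μH[1] :=
    hint ((continuousOn_id.pow 2).mul (hfs.mul hhs))
  have hre : ∫ z in sphere (0 : ℂ) d, (z ^ 2 * (f z * h z)).re ∂(μH[1]) = 0 := by
    have := integral_re hFi
    simpa [hF] using this
  have h1 : ∫ x in sphere (0 : EuclideanSpace ℝ (Fin 2)) d,
      ⟪gradient u x, ‖x‖⁻¹ • x⟫ * ⟪gradient v x, ‖x‖⁻¹ • x⟫ ∂(μH[1]) =
      d⁻¹ ^ 2 * ∫ z in sphere (0 : ℂ) d, (z * f z).re * (z * h z).re ∂(μH[1]) := by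
    rw [setIntegral_sphere_complexIso, ← integral_const_mul]
    refine setIntegral_congr_fun isClosed_sphere.measurableSet fun z hz => ?_
    have hzn : ‖complexIso z‖ = d := by simpa using hz
    simp only [hzn, real_inner_smul_right, inner_gradient_complexIso]
    ring
  have h2 : ∫ x in sphere (0 : EuclideanSpace ℝ (Fin 2)) d,
      ⟪gradient u x, gradient v x⟫ ∂(μH[1]) =
      ∫ z in sphere (0 : ℂ) d, (f z * star (h z)).re ∂(μH[1]) := by
    rw [setIntegral_sphere_complexIso]
    simp only [inner_gradient_gradient, f, h]
  have h3 : d ^ 2 * ∫ z in sphere (0 : ℂ) d, (f z * star (h z)).re ∂(μH[1]) =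
      2 * ∫ z in sphere (0 : ℂ) d, (z * f z).re * (z * h z).re ∂(μH[1]) := by
    rw [← sub_eq_zero, ← neg_eq_zero, ← hre, ← integral_const_mul, ← integral_const_mul,
      ← integral_sub (hB.const_mul _) (hA.const_mul _), ← integral_neg]
    refine setIntegral_congr_fun isClosed_sphere.measurableSet fun z hz => ?_
    have hzn : d ^ 2 = z.re * z.re + z.im * z.im := by
      have hz' : ‖z‖ = d := by simpa using hz
      rw [← hz', ← Complex.normSq_eq_norm_sq, Complex.normSq_apply]
    simp only [hzn, pow_two, Complex.mul_re, Complex.mul_im, Complex.star_def, Complex.conj_re,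
      Complex.conj_im]
    ring
  have hd0 : d ≠ 0 := hd.1.ne'
  rw [quadP, h1, h2]
  field_simp
  linear_combination h3

/-- If `u, v ∈ C²(B̄₁)` are harmonic in `B₁ \ {0}`, then `P_d(u,v)` is
independent of `d ∈ (0,1)`. -/
theorem quadP_independent_of_radius
    (u v : EuclideanSpace ℝ (Fin 2) → ℝ)
    (hu : ContDiffOn ℝ 2 u (closedBall (0 : EuclideanSpace ℝ (Fin 2)) 1))
    (hv : ContDiffOn ℝ 2 v (closedBall (0 : EuclideanSpace ℝ (Fin 2)) 1))
    (hu0 : ∀ x ∈ ball (0 : EuclideanSpace ℝ (Fin 2)) 1 \ {0}, lap u x = 0)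
    (hv0 : ∀ x ∈ ball (0 : EuclideanSpace ℝ (Fin 2)) 1 \ {0}, lap v x = 0) :
    ∀ d₁ ∈ Set.Ioo (0 : ℝ) 1, ∀ d₂ ∈ Set.Ioo (0 : ℝ) 1,
      quadP u v d₁ = quadP u v d₂ := by
  intro d₁ hd₁ d₂ hd₂
  rw [quadP_eq_zero hu hv hu0 hv0 hd₁, quadP_eq_zero hu hv hu0 hv0 hd₂]

end
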